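/- For all real numbers u ∈ (0,1], X ∈ [0,2] and Y > 2u², one has −Y·(6u² + 2X²) + 8Xu³ + 8X²u² − 8XYu − 16u²(1 − u²) < 0. -/

import Mathlib

/-!
The expression is affine in `Y`. Its slope `-2 (X + u) (X + 3 u)` is negative, and its value
`4 u² ((X - u)² - 4)` at the boundary point `Y = 2 u²`, where `ψ` vanishes, is nonpositive because
`|X - u| ≤ 2`.
-/

theorem evolution_bound_eq_boundary_value_sub_mul {R : Type*} [CommRing R] (u X Y : R) :
    -Y * (6 * u ^ 2 + 2 * X ^ 2) + 8 * X * u ^ 3 + 8 * X ^ 2 * u ^ 2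
        - 8 * X * Y * u - 16 * u ^ 2 * (1 - u ^ 2) =
      4 * u ^ 2 * ((X - u) ^ 2 - 2 ^ 2) - 2 * ((X + u) * (X + 3 * u)) * (Y - 2 * u ^ 2) := by
  ring

theorem stmt_11_general {R : Type*} [CommRing R] [LinearOrder R] [IsStrictOrderedRing R]
    {u X Y : R} (h_slope : 0 < (X + u) * (X + 3 * u)) (h_dist : |X - u| ≤ 2)
    (hY : 2 * u ^ 2 < Y) :
    -Y * (6 * u ^ 2 + 2 * X ^ 2) + 8 * X * u ^ 3 + 8 * X ^ 2 * u ^ 2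
      - 8 * X * Y * u - 16 * u ^ 2 * (1 - u ^ 2) < 0 := by
  have h_sq : (X - u) ^ 2 ≤ 2 ^ 2 := sq_le_sq' (abs_le.mp h_dist).1 (abs_le.mp h_dist).2
  have h_boundary : 4 * u ^ 2 * ((X - u) ^ 2 - 2 ^ 2) ≤ 0 :=
    mul_nonpos_of_nonneg_of_nonpos (by positivity) (sub_nonpos.mpr h_sq)
  have h_decrease : 0 < 2 * ((X + u) * (X + 3 * u)) * (Y - 2 * u ^ 2) :=
    mul_pos (mul_pos two_pos h_slope) (sub_pos.mpr hY)
  rw [evolution_bound_eq_boundary_value_sub_mul]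
  exact sub_neg_of_lt (h_boundary.trans_lt h_decrease)

/-- Computational core of Lemma `lemmaforARF1`: for `u ∈ (0,1]`, `X ∈ [0,2]` and
`Y > 2u²`, the bound on the evolution of `ψ = c_s − 2u²` at a positive maximum is
negative. -/
theorem stmt_11 :
    ∀ u X Y : ℝ, u ∈ Set.Ioc (0 : ℝ) 1 → X ∈ Set.Icc (0 : ℝ) 2 → Y > 2 * u ^ 2 →
      -Y * (6 * u ^ 2 + 2 * X ^ 2) + 8 * X * u ^ 3 + 8 * X ^ 2 * u ^ 2
        - 8 * X * Y * u - 16 * u ^ 2 * (1 - u ^ 2) < 0 := by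
  rintro u X Y ⟨hu0, hu1⟩ ⟨hX0, hX2⟩ hY
  exact stmt_11_general (by positivity) (abs_le.mpr ⟨by linarith, by linarith⟩) hY
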